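/- Let V be a finite-dimensional real vector space with an increasing filtration W by subspaces such that W_rV = 0 for r sufficiently small and W_rV = V for r sufficiently large, and let β : V → V⊗ℝ[x] be an ℝ-linear map with β(W_rV) ⊆ (W_{r−1}V)⊗ℝ[x] for all r. Define D : V⊗ℝ[x] → V⊗ℝ[x] by D(v⊗f) = v⊗(df/dx) + β(v)·f, where β(v)·f multiplies the polynomial component of β(v) by f. Then D is surjective; equivalently, 0 → ker D → V⊗ℝ[x] → V⊗ℝ[x] → 0 is a short exact sequence of real vector spaces. -/

import Mathlib

/-!
The proof is by induction along the filtration. Let `∫` denote termwise integration, a right inverse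
of `d/dx` that acts on coefficients by scalars. If `g` has coefficients in `W r`, then so
does `p = ∫ g`, and `D p = g + e`, where the error `e` has coefficients in `W (r - 1)`. If
`e = D q` by induction, then `g = D (p - q)`. The induction starts where `W` vanishes and
reaches every `g` because `W` is eventually all of `V`.
-/

/-!
# STATEMENT 2

Let `V` be a finite-dimensional real vector space with an increasing filtration `W` by
subspaces such that `W r = 0` for `r` sufficiently small and `W r = V` for `r` sufficiently
large, and let `β : V → V ⊗ ℝ[x]` be an `ℝ`-linear map with `β (W r) ⊆ (W (r-1)) ⊗ ℝ[x]`
for all `r`.  Define `D : V ⊗ ℝ[x] → V ⊗ ℝ[x]` by `D (v ⊗ f) = v ⊗ f' + β v · f`.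
Then `D` is surjective.

We identify `V ⊗ ℝ[x]` with finitely supported sequences `ℕ →₀ V` of coefficients
(`f n` being the coefficient of `x ^ n`).
-/

noncomputable section

open Finsupp

variable {V : Type} [AddCommGroup V] [Module ℝ V]

/-- Multiplication by `x ^ k` on `V ⊗ ℝ[x] = ℕ →₀ V`. -/
def shiftMap (k : ℕ) : (ℕ →₀ V) →ₗ[ℝ] (ℕ →₀ V) :=
  Finsupp.lsum ℝ fun n => Finsupp.lsingle (n + k)

/-- Differentiation `d/dx` on `V ⊗ ℝ[x] = ℕ →₀ V`:  `v ⊗ x^n ↦ n • v ⊗ x^(n-1)`. -/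
def derivMap : (ℕ →₀ V) →ₗ[ℝ] (ℕ →₀ V) :=
  Finsupp.lsum ℝ fun n => (n : ℝ) • Finsupp.lsingle (n - 1)

/-- The operator `D` of the statement: `D (v ⊗ f) = v ⊗ (df/dx) + β(v) · f`,
where the second summand multiplies the polynomial part of `β v` by `f`. -/
def twistedD (β : V →ₗ[ℝ] (ℕ →₀ V)) : (ℕ →₀ V) →ₗ[ℝ] (ℕ →₀ V) :=
  derivMap + Finsupp.lsum ℝ fun n => (shiftMap n) ∘ₗ β

/-- Termwise integration without constant term: `v ⊗ x^n ↦ (n + 1)⁻¹ • v ⊗ x^(n+1)`. -/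
def integralMap : (ℕ →₀ V) →ₗ[ℝ] (ℕ →₀ V) :=
  Finsupp.lsum ℝ fun n => ((n : ℝ) + 1)⁻¹ • Finsupp.lsingle (n + 1)

theorem derivMap_integralMap (g : ℕ →₀ V) : derivMap (integralMap g) = g := by
  induction g using Finsupp.induction_linear with
  | zero => simp
  | add f g hf hg => rw [map_add, map_add, hf, hg]
  | single n v =>
    have h : ((n : ℝ) + 1) ≠ 0 := by positivity
    simp [derivMap, integralMap, smul_smul, h]

/-- Elements of `V ⊗ ℝ[x]` whose coefficients all lie in `U`, i.e. the image of `U ⊗ ℝ[x]`. -/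
def coeffIn (U : Submodule ℝ V) : Submodule ℝ (ℕ →₀ V) where
  carrier := {f | ∀ n, f n ∈ U}
  add_mem' hf hg n := U.add_mem (hf n) (hg n)
  zero_mem' _ := U.zero_mem
  smul_mem' c _ hf n := U.smul_mem c (hf n)

theorem single_mem_coeffIn {U : Submodule ℝ V} (n : ℕ) {v : V} (hv : v ∈ U) :
    Finsupp.single n v ∈ coeffIn U := by
  intro m
  rw [Finsupp.single_apply]
  split_ifs
  exacts [hv, U.zero_mem]

/-- A map out of `V ⊗ ℝ[x]` sending each `v ⊗ x^n` with `v ∈ U` to coefficients in `U'`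
sends everything with coefficients in `U` to coefficients in `U'`. -/
theorem lsum_mem_coeffIn {U U' : Submodule ℝ V} (T : ℕ → V →ₗ[ℝ] (ℕ →₀ V))
    (hT : ∀ n, ∀ v ∈ U, T n v ∈ coeffIn U') {f : ℕ →₀ V} (hf : f ∈ coeffIn U) :
    Finsupp.lsum ℝ T f ∈ coeffIn U' := by
  rw [Finsupp.lsum_apply]
  exact Submodule.sum_mem _ fun n _ => hT n _ (hf n)

theorem integralMap_mem {U : Submodule ℝ V} {f : ℕ →₀ V} (hf : f ∈ coeffIn U) :
    integralMap f ∈ coeffIn U :=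
  lsum_mem_coeffIn _ (fun n _ hv =>
    Submodule.smul_mem _ _ (single_mem_coeffIn (n + 1) hv)) hf

theorem shiftMap_mem {U : Submodule ℝ V} (k : ℕ) {f : ℕ →₀ V} (hf : f ∈ coeffIn U) :
    shiftMap k f ∈ coeffIn U :=
  lsum_mem_coeffIn _ (fun n _ hv => single_mem_coeffIn (n + k) hv) hf

/-- The inductive form of surjectivity: `k` counts steps up from a level `a` where `W`
vanishes. -/
theorem exists_twistedD_eq (W : ℤ → Submodule ℝ V) {a : ℤ} (ha : W a = ⊥)
    (β : V →ₗ[ℝ] (ℕ →₀ V))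
    (hβ : ∀ (r : ℤ) (v : V), v ∈ W r → ∀ n : ℕ, β v n ∈ W (r - 1)) (k : ℕ) :
    ∀ g ∈ coeffIn (W (a + k)), ∃ f, twistedD β f = g := by
  induction k with
  | zero =>
    intro g hg
    refine ⟨0, ?_⟩
    ext n
    have h := hg n
    simp only [Nat.cast_zero, add_zero, ha, Submodule.mem_bot] at h
    simp [h]
  | succ k ih =>
    intro g hg
    have he : Finsupp.lsum ℝ (fun n => (shiftMap n) ∘ₗ β) (integralMap g)
        ∈ coeffIn (W (a + k)) := by
      refine lsum_mem_coeffIn _ (fun n v hv => shiftMap_mem n fun m => ?_) (integralMap_mem hg)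
      have h := hβ _ v hv m
      rwa [show a + ((k + 1 : ℕ) : ℤ) - 1 = a + k by push_cast; ring] at h
    obtain ⟨q, hq⟩ := ih _ he
    refine ⟨integralMap g - q, ?_⟩
    rw [map_sub, hq, twistedD, LinearMap.add_apply, derivMap_integralMap, add_sub_cancel_right]

theorem surjective_twistedD
    [FiniteDimensional ℝ V]
    (W : ℤ → Submodule ℝ V) (hmono : Monotone W)
    (hbot : ∃ a : ℤ, W a = ⊥) (htop : ∃ b : ℤ, W b = ⊤)
    (β : V →ₗ[ℝ] (ℕ →₀ V))
    (hβ : ∀ (r : ℤ) (v : V), v ∈ W r → ∀ n : ℕ, β v n ∈ W (r - 1)) :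
    Function.Surjective (twistedD β) := by
  obtain ⟨a, ha⟩ := hbot
  obtain ⟨b, hb⟩ := htop
  intro g
  refine exists_twistedD_eq W ha β hβ (b - a).toNat g fun n => ?_
  -- The level reached is `max a b`, which also covers the case `b < a`.
  have h : W b ≤ W (a + (b - a).toNat) := hmono (by omega)
  exact h (hb ▸ Submodule.mem_top)

end
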